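/- (Smoothness of the mollified entropy along particle paths.) Let y₁,…,y_n ∈ ℝ^d with second moment m₂ = (1/n)Σ_i‖y_i‖², let φ₁,…,φ_n ∈ ℝ^d, let t ≥ 0, and set z_j = y_j + t φ_j for each j. Let N_y and N_z denote the entropy gradient fields associated with the point families (y₁,…,y_n) and (z₁,…,z_n) respectively. Then (1/n) Σ_{j=1}^n ⟨N_z(z_j) − N_y(y_j), φ_j⟩ ≤ (1/ε² + 3√(m₂ n)/ε³ + √n/ε² + n√m₂/ε³) · t · (1/n) Σ_{j=1}^n ‖φ_j‖². -/

import Mathlib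

/-!
Write `S_y(θ) = ∑ᵢ k_ε(θ - yᵢ)`. As `∇k_ε(θ - yᵢ) = ε⁻² (yᵢ - θ) k_ε(θ - yᵢ)` and `k_ε(θ - yⱼ)` has
mean `yⱼ`, the entropy gradient at its own points satisfies
`∑ⱼ ⟪N_y(yⱼ), φⱼ⟫ = ε⁻² (Q_y(y, φ) - ∑ⱼ ⟪yⱼ, φⱼ⟫)`, where
`Q_y(x, φ) = ∫ S_y⁻¹ ∑ᵢⱼ k_ε(θ - yᵢ) k_ε(θ - yⱼ) ⟪xᵢ, φⱼ⟫ dθ` (`sum_inner_entGrad`).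

For `z = y + tφ` this gives
`∑ⱼ ⟪N_z(zⱼ) - N_y(yⱼ), φⱼ⟫ = ε⁻² (Q_z(y, φ) - Q_y(y, φ) + t Q_z(φ, φ) - t ∑ⱼ ‖φⱼ‖²)`.
Convexity of the squared norm yields `Q_z(φ, φ) ≤ ∑ⱼ ‖φⱼ‖²`, so only `Q_z(y, φ) - Q_y(y, φ)` matters.

`Q_y(x, φ)` is the `L²` inner product of the fields `S_y^{-1/2} ∑ᵢ k_ε(θ - yᵢ) xᵢ` for `x` and `φ`
(`wField`), whose `L²` norms are at most those of `x` and `φ`. In terms of `hᵢ = √k_ε(θ - yᵢ)` the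
field is `∑ᵢ (hᵢ² / |h|) xᵢ`, and `h ↦ (hᵢ² / |h|)ᵢ` is `3`-Lipschitz from the Euclidean to the `ℓ¹`
norm (`norm_sum_sq_div_sub_le`). Finally `‖√k_ε(· - zᵢ) - √k_ε(· - yᵢ)‖_{L²} ≤ ‖zᵢ - yᵢ‖ / (2ε)`, by
the exact formula for the Hellinger distance of two Gaussians (`hellinger_kG`). Cauchy–Schwarz then
gives `Q_z(y, φ) - Q_y(y, φ) ≤ 3 t √(m₂ n) ∑ⱼ ‖φⱼ‖² / ε`. So the term `3√(m₂ n)/ε³` of the constant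
alone suffices; the others are nonnegative.
-/

open MeasureTheory Real RealInnerProductSpace

/-- The normalized Gaussian kernel on `ℝ^d` with covariance `ε² I_d`. -/
noncomputable def kG (d : ℕ) (ε : ℝ) (x : EuclideanSpace ℝ (Fin d)) : ℝ :=
  (2 * π * ε ^ 2) ^ (-(d : ℝ) / 2) * Real.exp (-‖x‖ ^ 2 / (2 * ε ^ 2))

/-- Gradient of the Gaussian kernel: `∇k_ε(x) = -(x/ε²) k_ε(x)`. -/
noncomputable def nablaKG (d : ℕ) (ε : ℝ) (x : EuclideanSpace ℝ (Fin d)) :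
    EuclideanSpace ℝ (Fin d) :=
  (-(1 / ε ^ 2) * kG d ε x) • x

/-- The entropy gradient field associated with the points `ys`:
`N_y(w) = ∫ k_ε(θ - w) (Σᵢ ∇k_ε(θ - yᵢ))/(Σᵢ k_ε(θ - yᵢ)) dθ`. -/
noncomputable def entGrad (d : ℕ) (ε : ℝ) {n : ℕ} (ys : Fin n → EuclideanSpace ℝ (Fin d))
    (w : EuclideanSpace ℝ (Fin d)) : EuclideanSpace ℝ (Fin d) :=
  ∫ θ, ((∑ i, kG d ε (θ - ys i))⁻¹ * kG d ε (θ - w)) • (∑ i, nablaKG d ε (θ - ys i))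

/-! ### The Gaussian kernel -/

section Kernel

variable {d : ℕ} {ε : ℝ}

lemma kG_pos (hε : 0 < ε) (x : EuclideanSpace ℝ (Fin d)) : 0 < kG d ε x := by
  unfold kG; positivity

lemma continuous_kG : Continuous (kG d ε) := by
  unfold kG; fun_prop

lemma integral_kG (hε : 0 < ε) : ∫ θ, kG d ε θ = 1 := by
  have h := GaussianFourier.integral_rexp_neg_mul_sq_norm (V := EuclideanSpace ℝ (Fin d))
    (b := 1 / (2 * ε ^ 2)) (by positivity)
  have hk : kG d ε = fun v => (2 * π * ε ^ 2) ^ (-(d : ℝ) / 2) *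
      Real.exp (-(1 / (2 * ε ^ 2)) * ‖v‖ ^ 2) := by
    funext v
    unfold kG
    congr 2
    ring
  rw [hk, integral_const_mul, h, finrank_euclideanSpace_fin]
  rw [show π / (1 / (2 * ε ^ 2)) = 2 * π * ε ^ 2 by field_simp, ← Real.rpow_add (by positivity)]
  rw [show -(d : ℝ) / 2 + (d : ℝ) / 2 = 0 by ring, Real.rpow_zero]

lemma integrable_kG (hε : 0 < ε) : Integrable (kG d ε) := by
  by_contra h
  have := integral_undef h
  rw [integral_kG hε] at this
  exact one_ne_zero this

lemma integral_kG_sub (hε : 0 < ε) (w : EuclideanSpace ℝ (Fin d)) :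
    ∫ θ, kG d ε (θ - w) = 1 := by
  rw [integral_sub_right_eq_self (kG d ε) w, integral_kG hε]

lemma integrable_kG_sub (hε : 0 < ε) (w : EuclideanSpace ℝ (Fin d)) :
    Integrable fun θ => kG d ε (θ - w) :=
  (integrable_kG hε).comp_sub_right w

/-- The Gaussian has a first moment: the factor `‖θ‖` costs at most passing to the standard
deviation `2ε`. -/
lemma integrable_kG_smul (hε : 0 < ε) :
    Integrable fun θ : EuclideanSpace ℝ (Fin d) => kG d ε θ • θ := by
  have h2 : Integrable (kG d (2 * ε)) := integrable_kG (by positivity)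
  set c₁ : ℝ := (2 * π * ε ^ 2) ^ (-(d : ℝ) / 2) with hc₁
  set c₂ : ℝ := (2 * π * (2 * ε) ^ 2) ^ (-(d : ℝ) / 2) with hc₂
  have hc₁p : 0 < c₁ := by positivity
  have hc₂p : 0 < c₂ := by positivity
  refine (h2.const_mul (4 * ε * c₁ / c₂)).mono'
    (continuous_kG.smul continuous_id).aestronglyMeasurable (.of_forall fun θ => ?_)
  rw [norm_smul, Real.norm_of_nonneg (kG_pos hε θ).le]
  unfold kG
  rw [← hc₁, ← hc₂]
  have hx : ‖θ‖ ≤ 4 * ε * Real.exp (3 * ‖θ‖ ^ 2 / (8 * ε ^ 2)) := by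
    have h1 : 3 * ‖θ‖ ^ 2 / (8 * ε ^ 2) + 1 ≤ Real.exp (3 * ‖θ‖ ^ 2 / (8 * ε ^ 2)) :=
      Real.add_one_le_exp _
    have h3 : ‖θ‖ ≤ 4 * ε * (3 * ‖θ‖ ^ 2 / (8 * ε ^ 2) + 1) := by
      have : 4 * ε * (3 * ‖θ‖ ^ 2 / (8 * ε ^ 2) + 1) - ‖θ‖ =
          (3 / 2 * ‖θ‖ ^ 2 - ε * ‖θ‖ + 4 * ε ^ 2) / ε := by
        field_simp; ring
      have h4 : 0 ≤ (3 / 2 * ‖θ‖ ^ 2 - ε * ‖θ‖ + 4 * ε ^ 2) / ε := by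
        apply div_nonneg _ hε.le
        nlinarith [sq_nonneg (‖θ‖ - ε)]
      linarith
    exact h3.trans (by gcongr)
  have he : Real.exp (-‖θ‖ ^ 2 / (2 * (2 * ε) ^ 2)) =
      Real.exp (-‖θ‖ ^ 2 / (2 * ε ^ 2)) * Real.exp (3 * ‖θ‖ ^ 2 / (8 * ε ^ 2)) := by
    rw [← Real.exp_add]; congr 1; field_simp; ring
  rw [he]
  calc c₁ * Real.exp (-‖θ‖ ^ 2 / (2 * ε ^ 2)) * ‖θ‖
      ≤ c₁ * Real.exp (-‖θ‖ ^ 2 / (2 * ε ^ 2)) *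
        (4 * ε * Real.exp (3 * ‖θ‖ ^ 2 / (8 * ε ^ 2))) := by gcongr
    _ = _ := by field_simp

lemma integral_kG_smul : ∫ θ : EuclideanSpace ℝ (Fin d), kG d ε θ • θ = 0 := by
  have h := integral_neg_eq_self (fun θ : EuclideanSpace ℝ (Fin d) => kG d ε θ • θ) volume
  have h2 : ∀ θ : EuclideanSpace ℝ (Fin d), kG d ε (-θ) • (-θ) = -(kG d ε θ • θ) := by
    intro θ; simp [kG]
  simp only [h2, integral_neg] at h
  have h3 : (2 : ℝ) • ∫ θ : EuclideanSpace ℝ (Fin d), kG d ε θ • θ = 0 := by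
    rw [two_smul]
    nth_rewrite 1 [← h]
    exact neg_add_cancel _
  exact (smul_eq_zero.1 h3).resolve_left two_ne_zero

/-- The squared Hellinger distance between two translates of the Gaussian. The product of the two
square roots is `exp (-‖z - y‖² / (8ε²))` times the Gaussian centred at the midpoint. -/
lemma hellinger_kG (hε : 0 < ε) (y z : EuclideanSpace ℝ (Fin d)) :
    Integrable (fun θ => (√(kG d ε (θ - z)) - √(kG d ε (θ - y))) ^ 2) ∧
    ∫ θ, (√(kG d ε (θ - z)) - √(kG d ε (θ - y))) ^ 2 ≤ ‖z - y‖ ^ 2 / (4 * ε ^ 2) := by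
  have hp : ∀ θ, (√(kG d ε (θ - z)) - √(kG d ε (θ - y))) ^ 2 =
      kG d ε (θ - z) + kG d ε (θ - y) -
        2 * Real.exp (-‖z - y‖ ^ 2 / (8 * ε ^ 2)) * kG d ε (θ - (1 / 2 : ℝ) • (z + y)) := by
    intro θ
    have hm : √(kG d ε (θ - z)) * √(kG d ε (θ - y)) =
        Real.exp (-‖z - y‖ ^ 2 / (8 * ε ^ 2)) * kG d ε (θ - (1 / 2 : ℝ) • (z + y)) := by
      rw [← Real.sqrt_mul (kG_pos hε _).le, Real.sqrt_eq_iff_mul_self_eq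
        (mul_pos (kG_pos hε _) (kG_pos hε _)).le
        (mul_pos (Real.exp_pos _) (kG_pos hε _)).le]
      unfold kG
      have hpar : ‖θ - z‖ ^ 2 + ‖θ - y‖ ^ 2 =
          2 * ‖θ - (1 / 2 : ℝ) • (z + y)‖ ^ 2 + ‖z - y‖ ^ 2 / 2 := by
        have h1 := parallelogram_law_with_norm ℝ (θ - z) (θ - y)
        have h2 : θ - z + (θ - y) = (2 : ℝ) • (θ - (1 / 2 : ℝ) • (z + y)) := by module
        have h3 : θ - z - (θ - y) = -(z - y) := by abel
        rw [h2, h3, norm_neg, norm_smul] at h1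
        norm_num at h1
        norm_num
        linarith
      set c : ℝ := (2 * π * ε ^ 2) ^ (-(d : ℝ) / 2)
      have : Real.exp (-‖θ - z‖ ^ 2 / (2 * ε ^ 2)) * Real.exp (-‖θ - y‖ ^ 2 / (2 * ε ^ 2)) =
          (Real.exp (-‖z - y‖ ^ 2 / (8 * ε ^ 2)) *
            Real.exp (-‖θ - (1 / 2 : ℝ) • (z + y)‖ ^ 2 / (2 * ε ^ 2))) ^ 2 := by
        rw [← Real.exp_add, ← Real.exp_add, ← Real.exp_nat_mul]
        congr 1
        have : ‖θ - z‖ ^ 2 = 2 * ‖θ - (1 / 2 : ℝ) • (z + y)‖ ^ 2 + ‖z - y‖ ^ 2 / 2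
          - ‖θ - y‖ ^ 2 := by linarith
        rw [this]
        push_cast
        field_simp
        ring
      linear_combination c ^ 2 * this
    have e1 := Real.sq_sqrt (kG_pos hε (θ - z)).le
    have e2 := Real.sq_sqrt (kG_pos hε (θ - y)).le
    linear_combination e1 + e2 - 2 * hm
  have hi := ((integrable_kG_sub hε z).add (integrable_kG_sub hε y)).sub
    ((integrable_kG_sub hε ((1 / 2 : ℝ) • (z + y))).const_mul
      (2 * Real.exp (-‖z - y‖ ^ 2 / (8 * ε ^ 2))))
  refine ⟨hi.congr (.of_forall fun θ => (hp θ).symm), ?_⟩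
  simp_rw [hp]
  rw [integral_sub (by exact (integrable_kG_sub hε z).add (integrable_kG_sub hε y))
    ((integrable_kG_sub hε _).const_mul _), integral_add (integrable_kG_sub hε z)
    (integrable_kG_sub hε y), integral_const_mul, integral_kG_sub hε, integral_kG_sub hε,
    integral_kG_sub hε]
  have h := Real.add_one_le_exp (-‖z - y‖ ^ 2 / (8 * ε ^ 2))
  have h2 : ‖z - y‖ ^ 2 / (4 * ε ^ 2) = -2 * (-‖z - y‖ ^ 2 / (8 * ε ^ 2)) := by
    field_simp; ring
  rw [h2]
  linarith

end Kernel

/-! ### Cauchy–Schwarz and a Lipschitz estimate in finite dimension -/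

/-- Cauchy–Schwarz for integrals, with bounds on the two second moments. -/
lemma integral_mul_le_of_sq {α : Type*} [MeasurableSpace α] {μ : Measure α} {f g : α → ℝ}
    (hfm : AEStronglyMeasurable f μ) (hgm : AEStronglyMeasurable g μ)
    (hf0 : ∀ x, 0 ≤ f x) (hg0 : ∀ x, 0 ≤ g x)
    (hf : Integrable (fun x => f x ^ 2) μ) (hg : Integrable (fun x => g x ^ 2) μ)
    {a b : ℝ} (ha : 0 ≤ a) (hb : 0 ≤ b)
    (hfa : ∫ x, f x ^ 2 ∂μ ≤ a ^ 2) (hgb : ∫ x, g x ^ 2 ∂μ ≤ b ^ 2) :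
    Integrable (fun x => f x * g x) μ ∧ ∫ x, f x * g x ∂μ ≤ a * b := by
  have hfL := (memLp_two_iff_integrable_sq hfm).2 hf
  have hgL := (memLp_two_iff_integrable_sq hgm).2 hg
  refine ⟨hfL.integrable_mul hgL, ?_⟩
  have h := integral_mul_le_Lp_mul_Lq_of_nonneg (μ := μ) (p := 2) (q := 2)
    Real.HolderConjugate.two_two (.of_forall hf0) (.of_forall hg0)
    (by simpa using hfL) (by simpa using hgL)
  simp only [Real.rpow_two, ← Real.sqrt_eq_rpow] at h
  refine h.trans (mul_le_mul (Real.sqrt_le_iff.2 ⟨ha, hfa⟩) (Real.sqrt_le_iff.2 ⟨hb, hgb⟩)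
    (Real.sqrt_nonneg _) ha)

/-- The map `h ↦ (hᵢ² / |h|)ᵢ` is `3`-Lipschitz from the Euclidean norm to the `ℓ¹` norm, tested
here against vectors of norm at most `M`. -/
lemma norm_sum_sq_div_sub_le {n : ℕ} {E : Type*} [NormedAddCommGroup E] [NormedSpace ℝ E]
    (h h' : Fin n → ℝ) (hh : ∀ i, 0 < h i) (hh' : ∀ i, 0 < h' i) (hn : 1 ≤ n)
    (x : Fin n → E) {M : ℝ} (hM : ∀ i, ‖x i‖ ≤ M) :
    ‖(√(∑ i, h' i ^ 2))⁻¹ • ∑ i, h' i ^ 2 • x i - (√(∑ i, h i ^ 2))⁻¹ • ∑ i, h i ^ 2 • x i‖ ≤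
      3 * M * √(∑ i, (h' i - h i) ^ 2) := by
  have : Nonempty (Fin n) := ⟨⟨0, hn⟩⟩
  have hM0 : 0 ≤ M := (norm_nonneg _).trans (hM ⟨0, hn⟩)
  set r := √(∑ i, h i ^ 2) with hr
  set r' := √(∑ i, h' i ^ 2) with hr'
  set D := √(∑ i, (h' i - h i) ^ 2) with hD
  have hs : 0 < ∑ i, h i ^ 2 :=
    Finset.sum_pos (fun i _ => pow_pos (hh i) 2) Finset.univ_nonempty
  have hs' : 0 < ∑ i, h' i ^ 2 :=
    Finset.sum_pos (fun i _ => pow_pos (hh' i) 2) Finset.univ_nonempty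
  have hr0 : 0 < r := Real.sqrt_pos.2 hs
  have hr0' : 0 < r' := Real.sqrt_pos.2 hs'
  have hD0 : 0 ≤ D := Real.sqrt_nonneg _
  have e1 : ∑ i, |h' i - h i| * (h' i / r') ≤ D := by
    have := Real.sum_mul_le_sqrt_mul_sqrt Finset.univ (fun i => |h' i - h i|) h'
    simp only [sq_abs] at this
    rw [← hr', ← hD] at this
    simp only [mul_div_assoc', ← Finset.sum_div]
    rwa [div_le_iff₀ hr0']
  have e2 : ∑ i, |h' i - h i| * (h i / r) ≤ D := by
    have := Real.sum_mul_le_sqrt_mul_sqrt Finset.univ (fun i => |h' i - h i|) h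
    simp only [sq_abs] at this
    rw [← hr, ← hD] at this
    simp only [mul_div_assoc', ← Finset.sum_div]
    rwa [div_le_iff₀ hr0]
  have e3 : ∑ i, (h i / r) * (h' i / r') ≤ 1 := by
    have := Real.sum_mul_le_sqrt_mul_sqrt Finset.univ h h'
    rw [← hr, ← hr'] at this
    simp only [div_mul_div_comm, ← Finset.sum_div]
    rwa [div_le_one (by positivity)]
  have e4 : |r - r'| ≤ D := by
    have := abs_norm_sub_norm_le (WithLp.toLp 2 h' : EuclideanSpace ℝ (Fin n)) (WithLp.toLp 2 h)
    rw [← WithLp.toLp_sub] at this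
    simp only [EuclideanSpace.norm_eq, Real.norm_eq_abs, sq_abs, Pi.sub_apply] at this
    rw [abs_sub_comm]
    exact this
  have hc : ∀ i, |r'⁻¹ * h' i ^ 2 - r⁻¹ * h i ^ 2| ≤
      |h' i - h i| * (h' i / r') + |r - r'| * ((h i / r) * (h' i / r')) +
        |h' i - h i| * (h i / r) := by
    intro i
    -- Replace one factor at a time in `hᵢ · (hᵢ / r)`, and write the change of the unit vector as
    -- `r (h' / r' - h / r) = (r - r') h' / r' + (h' - h)`.
    have : r'⁻¹ * h' i ^ 2 - r⁻¹ * h i ^ 2 = (h' i - h i) * (h' i / r') +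
        (r - r') * ((h i / r) * (h' i / r')) + (h' i - h i) * (h i / r) := by
      field_simp; ring
    rw [this]
    have p1 : 0 ≤ h' i / r' := (div_pos (hh' i) hr0').le
    have p2 : 0 ≤ h i / r := (div_pos (hh i) hr0).le
    refine (abs_add_three _ _ _).trans ?_
    simp only [abs_mul, abs_of_nonneg p1, abs_of_nonneg p2, le_refl]
  have hsum : ∑ i, |r'⁻¹ * h' i ^ 2 - r⁻¹ * h i ^ 2| ≤ 3 * D := by
    refine (Finset.sum_le_sum fun i _ => hc i).trans ?_
    rw [Finset.sum_add_distrib, Finset.sum_add_distrib, ← Finset.mul_sum]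
    have : |r - r'| * ∑ i, (h i / r) * (h' i / r') ≤ D * 1 :=
      mul_le_mul e4 e3 (Finset.sum_nonneg fun i _ =>
        (mul_pos (div_pos (hh i) hr0) (div_pos (hh' i) hr0')).le) hD0
    linarith
  have heq : r'⁻¹ • ∑ i, h' i ^ 2 • x i - r⁻¹ • ∑ i, h i ^ 2 • x i =
      ∑ i, (r'⁻¹ * h' i ^ 2 - r⁻¹ * h i ^ 2) • x i := by
    simp only [Finset.smul_sum, smul_smul, sub_smul, Finset.sum_sub_distrib]
  rw [heq]
  calc ‖∑ i, (r'⁻¹ * h' i ^ 2 - r⁻¹ * h i ^ 2) • x i‖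
      ≤ ∑ i, |r'⁻¹ * h' i ^ 2 - r⁻¹ * h i ^ 2| * M := by
        refine norm_sum_le_of_le _ fun i _ => ?_
        rw [norm_smul, Real.norm_eq_abs]
        exact mul_le_mul_of_nonneg_left (hM i) (abs_nonneg _)
    _ = (∑ i, |r'⁻¹ * h' i ^ 2 - r⁻¹ * h i ^ 2|) * M := by rw [Finset.sum_mul]
    _ ≤ 3 * D * M := by gcongr
    _ = 3 * M * D := by ring

/-! ### The entropy gradient as a bilinear form -/

section Field

variable {d n : ℕ} {ε : ℝ}

/-- The kernel-weighted sum `∑ᵢ k_ε(θ - ysᵢ) xsᵢ`, divided by the square root of the kernel density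
`S(θ) = ∑ᵢ k_ε(θ - ysᵢ)`. With this normalization `⟪wField ys xs, wField ys φs⟫` is the quadratic
expression with a single factor `S⁻¹` occurring in the entropy gradient. -/
noncomputable def wField (d : ℕ) (ε : ℝ) {n : ℕ} (ys xs : Fin n → EuclideanSpace ℝ (Fin d))
    (θ : EuclideanSpace ℝ (Fin d)) : EuclideanSpace ℝ (Fin d) :=
  (√(∑ i, kG d ε (θ - ys i)))⁻¹ • ∑ i, kG d ε (θ - ys i) • xs i

lemma sum_kG_pos (hε : 0 < ε) (hn : 1 ≤ n) (ys : Fin n → EuclideanSpace ℝ (Fin d))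
    (θ : EuclideanSpace ℝ (Fin d)) : 0 < ∑ i, kG d ε (θ - ys i) :=
  have : Nonempty (Fin n) := ⟨⟨0, hn⟩⟩
  Finset.sum_pos (fun _ _ => kG_pos hε _) Finset.univ_nonempty

lemma continuous_kG_sub (w : EuclideanSpace ℝ (Fin d)) : Continuous fun θ => kG d ε (θ - w) :=
  continuous_kG.comp (continuous_id.sub continuous_const)

lemma continuous_wField (hε : 0 < ε) (hn : 1 ≤ n) (ys xs : Fin n → EuclideanSpace ℝ (Fin d)) :
    Continuous (wField d ε ys xs) := by
  unfold wField
  refine Continuous.smul (Continuous.inv₀ (Real.continuous_sqrt.comp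
    (continuous_finsetSum _ fun i _ => continuous_kG_sub _)) fun θ => ?_)
    (continuous_finsetSum _ fun i _ => (continuous_kG_sub _).smul continuous_const)
  exact (Real.sqrt_pos.2 (sum_kG_pos hε hn ys θ)).ne'

lemma norm_wField_sq_le (hε : 0 < ε) (hn : 1 ≤ n) (ys xs : Fin n → EuclideanSpace ℝ (Fin d))
    (θ : EuclideanSpace ℝ (Fin d)) :
    ‖wField d ε ys xs θ‖ ^ 2 ≤ ∑ i, kG d ε (θ - ys i) * ‖xs i‖ ^ 2 := by
  have hS := sum_kG_pos hε hn ys θ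
  unfold wField
  rw [norm_smul, mul_pow, norm_inv, Real.norm_of_nonneg (Real.sqrt_nonneg _), inv_pow,
    Real.sq_sqrt hS.le, inv_mul_le_iff₀ hS]
  have h1 : ‖∑ i, kG d ε (θ - ys i) • xs i‖ ≤ ∑ i, kG d ε (θ - ys i) * ‖xs i‖ :=
    norm_sum_le_of_le _ fun i _ => by
      rw [norm_smul, Real.norm_of_nonneg (kG_pos hε _).le]
  refine (pow_le_pow_left₀ (norm_nonneg _) h1 2).trans ?_
  refine Finset.sum_sq_le_sum_mul_sum_of_sq_le_mul _ (fun i _ => (kG_pos hε _).le)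
    (fun i _ => mul_nonneg (kG_pos hε _).le (sq_nonneg _)) fun i _ => by
      rw [mul_pow, sq, mul_assoc]

/-- Each kernel has mass one, so the `L²` norm of `wField ys xs` is at most that of `xs`. -/
lemma integral_norm_wField_sq_le (hε : 0 < ε) (hn : 1 ≤ n)
    (ys xs : Fin n → EuclideanSpace ℝ (Fin d)) :
    Integrable (fun θ => ‖wField d ε ys xs θ‖ ^ 2) ∧
    ∫ θ, ‖wField d ε ys xs θ‖ ^ 2 ≤ ∑ i, ‖xs i‖ ^ 2 := by
  have hi : Integrable fun θ => ∑ i, kG d ε (θ - ys i) * ‖xs i‖ ^ 2 :=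
    integrable_finsetSum _ fun i _ => (integrable_kG_sub hε _).mul_const _
  have h1 : Integrable (fun θ => ‖wField d ε ys xs θ‖ ^ 2) :=
    hi.mono' ((continuous_wField hε hn ys xs).norm.pow 2).aestronglyMeasurable
      (.of_forall fun θ => by
        rw [Real.norm_of_nonneg (sq_nonneg _)]
        exact norm_wField_sq_le hε hn ys xs θ)
  refine ⟨h1, (integral_mono h1 hi (norm_wField_sq_le hε hn ys xs)).trans_eq ?_⟩
  rw [integral_finsetSum _ fun i _ => (integrable_kG_sub hε _).mul_const _]
  simp only [integral_mul_const, integral_kG_sub hε, one_mul]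

lemma integrable_inner_wField (hε : 0 < ε) (hn : 1 ≤ n)
    (ys xs xs' : Fin n → EuclideanSpace ℝ (Fin d)) :
    Integrable fun θ => ⟪wField d ε ys xs θ, wField d ε ys xs' θ⟫ := by
  have hc := continuous_wField hε hn ys xs
  have hc' := continuous_wField hε hn ys xs'
  refine ((integral_norm_wField_sq_le hε hn ys xs).1.add
    (integral_norm_wField_sq_le hε hn ys xs').1).mono'
    (hc.inner hc').aestronglyMeasurable (.of_forall fun θ => ?_)
  refine (norm_inner_le_norm _ _).trans ?_
  simp only [Pi.add_apply]
  nlinarith [sq_nonneg (‖wField d ε ys xs θ‖ - ‖wField d ε ys xs' θ‖),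
    sq_nonneg (‖wField d ε ys xs θ‖), sq_nonneg (‖wField d ε ys xs' θ‖)]

/-- The integrand is bounded by `∑ᵢ k_ε(θ - ysᵢ) ‖ysᵢ‖`, since `k_ε(θ - ysⱼ)` is at most the whole
kernel sum. -/
lemma integrable_weighted (hε : 0 < ε) (hn : 1 ≤ n) (ys : Fin n → EuclideanSpace ℝ (Fin d))
    (j : Fin n) :
    Integrable fun θ => ((∑ i, kG d ε (θ - ys i))⁻¹ * kG d ε (θ - ys j)) •
      ∑ i, kG d ε (θ - ys i) • ys i := by
  have hS := sum_kG_pos hε hn ys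
  have hc : Continuous fun θ => ((∑ i, kG d ε (θ - ys i))⁻¹ * kG d ε (θ - ys j)) •
      ∑ i, kG d ε (θ - ys i) • ys i :=
    (((continuous_finsetSum _ fun i _ => continuous_kG_sub _).inv₀ fun θ => (hS θ).ne').mul
      (continuous_kG_sub _)).smul
      (continuous_finsetSum _ fun i _ => (continuous_kG_sub _).smul continuous_const)
  have hi : Integrable fun θ => ∑ i, kG d ε (θ - ys i) * ‖ys i‖ :=
    integrable_finsetSum _ fun i _ => (integrable_kG_sub hε _).mul_const _
  refine hi.mono' hc.aestronglyMeasurable (.of_forall fun θ => ?_)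
  have h1 : ‖∑ i, kG d ε (θ - ys i) • ys i‖ ≤ ∑ i, kG d ε (θ - ys i) * ‖ys i‖ :=
    norm_sum_le_of_le _ fun i _ => by
      rw [norm_smul, Real.norm_of_nonneg (kG_pos hε _).le]
  have h2 : (∑ i, kG d ε (θ - ys i))⁻¹ * kG d ε (θ - ys j) ≤ 1 := by
    rw [inv_mul_le_iff₀ (hS θ), mul_one]
    exact Finset.single_le_sum (f := fun i => kG d ε (θ - ys i))
      (fun i _ => (kG_pos hε _).le) (Finset.mem_univ j)
  have h3 : 0 ≤ (∑ i, kG d ε (θ - ys i))⁻¹ * kG d ε (θ - ys j) :=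
    mul_nonneg (inv_nonneg.2 (hS θ).le) (kG_pos hε _).le
  rw [norm_smul, Real.norm_of_nonneg h3]
  exact (mul_le_of_le_one_left (norm_nonneg _) h2).trans h1

/-- The Gaussian `k_ε(θ - y_j)` has mean `y_j`, so `N_y(y_j)` is `ε⁻²` times the difference between
the average of the posterior means `∑ᵢ k_ε(θ - yᵢ) yᵢ / ∑ᵢ k_ε(θ - yᵢ)` and `y_j`. -/
lemma entGrad_eq (hε : 0 < ε) (hn : 1 ≤ n) (ys : Fin n → EuclideanSpace ℝ (Fin d)) (j : Fin n) :
    entGrad d ε ys (ys j) = (1 / ε ^ 2) •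
      ((∫ θ, ((∑ i, kG d ε (θ - ys i))⁻¹ * kG d ε (θ - ys j)) •
        ∑ i, kG d ε (θ - ys i) • ys i) - ys j) := by
  have hS := sum_kG_pos hε hn ys
  have i1 : Integrable fun θ => kG d ε (θ - ys j) • (θ - ys j) :=
    (integrable_kG_smul hε).comp_sub_right (ys j)
  have i2 : Integrable fun θ => kG d ε (θ - ys j) • ys j :=
    (integrable_kG_sub hε _).smul_const _
  have i3 := integrable_weighted hε hn ys j
  have hpt : ∀ θ, ((∑ i, kG d ε (θ - ys i))⁻¹ * kG d ε (θ - ys j)) •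
      (∑ i, nablaKG d ε (θ - ys i)) = (1 / ε ^ 2) •
      (((∑ i, kG d ε (θ - ys i))⁻¹ * kG d ε (θ - ys j)) • ∑ i, kG d ε (θ - ys i) • ys i -
        (kG d ε (θ - ys j) • (θ - ys j) + kG d ε (θ - ys j) • ys j)) := by
    intro θ
    have h1 : ∑ i, nablaKG d ε (θ - ys i) = (1 / ε ^ 2) • (∑ i, kG d ε (θ - ys i) • ys i -
        (∑ i, kG d ε (θ - ys i)) • θ) := by
      rw [Finset.sum_smul, ← Finset.sum_sub_distrib, Finset.smul_sum]
      refine Finset.sum_congr rfl fun i _ => ?_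
      unfold nablaKG
      module
    have h2 : ((∑ i, kG d ε (θ - ys i))⁻¹ * kG d ε (θ - ys j)) • (∑ i, kG d ε (θ - ys i)) • θ =
        kG d ε (θ - ys j) • θ := by
      rw [smul_smul]
      congr 1
      have := (hS θ).ne'
      field_simp
    rw [h1, smul_comm, smul_sub _ (∑ i, kG d ε (θ - ys i) • ys i), h2]
    congr 2
    module
  unfold entGrad
  simp_rw [hpt]
  rw [integral_smul, integral_sub i3 (by exact i1.add i2), integral_add i1 i2,
    integral_sub_right_eq_self (fun θ : EuclideanSpace ℝ (Fin d) => kG d ε θ • θ) (ys j),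
    integral_kG_smul, zero_add, integral_smul_const, integral_kG_sub hε, one_smul]

lemma sum_inner_entGrad (hε : 0 < ε) (hn : 1 ≤ n) (ys φs : Fin n → EuclideanSpace ℝ (Fin d)) :
    ∑ j, ⟪entGrad d ε ys (ys j), φs j⟫ =
      (1 / ε ^ 2) * ((∫ θ, ⟪wField d ε ys ys θ, wField d ε ys φs θ⟫) - ∑ j, ⟪ys j, φs j⟫) := by
  have i3 := integrable_weighted hε hn ys
  have h1 : ∫ θ, ⟪wField d ε ys ys θ, wField d ε ys φs θ⟫ =
      ∑ j, ⟪∫ θ, ((∑ i, kG d ε (θ - ys i))⁻¹ * kG d ε (θ - ys j)) •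
        ∑ i, kG d ε (θ - ys i) • ys i, φs j⟫ := by
    have h2 : ∀ j, ⟪∫ θ, ((∑ i, kG d ε (θ - ys i))⁻¹ * kG d ε (θ - ys j)) •
        ∑ i, kG d ε (θ - ys i) • ys i, φs j⟫ =
        ∫ θ, ⟪φs j, ((∑ i, kG d ε (θ - ys i))⁻¹ * kG d ε (θ - ys j)) •
        ∑ i, kG d ε (θ - ys i) • ys i⟫ := fun j => by
      rw [integral_inner (i3 j), real_inner_comm]
    simp_rw [h2]
    rw [← integral_finsetSum _ fun j _ => (i3 j).const_inner (φs j)]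
    congr 1
    funext θ
    have hS := sum_kG_pos hε hn ys θ
    unfold wField
    rw [real_inner_smul_left, real_inner_smul_right, inner_sum, ← mul_assoc, ← mul_inv,
      Real.mul_self_sqrt hS.le, Finset.mul_sum]
    refine Finset.sum_congr rfl fun j _ => ?_
    rw [real_inner_smul_right, real_inner_smul_right, real_inner_comm (φs j), mul_assoc]
  rw [h1, ← Finset.sum_sub_distrib, Finset.mul_sum]
  refine Finset.sum_congr rfl fun j _ => ?_
  rw [entGrad_eq hε hn, real_inner_smul_left, inner_sub_left]

lemma wField_add_smul (ws xs φs zs : Fin n → EuclideanSpace ℝ (Fin d)) (t : ℝ)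
    (hzs : ∀ j, zs j = xs j + t • φs j) (θ : EuclideanSpace ℝ (Fin d)) :
    wField d ε ws zs θ = wField d ε ws xs θ + t • wField d ε ws φs θ := by
  unfold wField
  simp only [hzs, smul_add, Finset.sum_add_distrib, Finset.smul_sum]
  congr 1
  refine Finset.sum_congr rfl fun i _ => ?_
  module

/-! ### Dependence on the kernel centres -/

/-- The Euclidean distance between the square-root kernel vectors of two configurations. -/
noncomputable def rootDist (d : ℕ) (ε : ℝ) {n : ℕ} (ys zs : Fin n → EuclideanSpace ℝ (Fin d))
    (θ : EuclideanSpace ℝ (Fin d)) : ℝ :=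
  √(∑ i, (√(kG d ε (θ - zs i)) - √(kG d ε (θ - ys i))) ^ 2)

lemma norm_wField_sub_le (hε : 0 < ε) (hn : 1 ≤ n) (ys zs xs : Fin n → EuclideanSpace ℝ (Fin d))
    {M : ℝ} (hM : ∀ i, ‖xs i‖ ≤ M) (θ : EuclideanSpace ℝ (Fin d)) :
    ‖wField d ε zs xs θ - wField d ε ys xs θ‖ ≤ 3 * M * rootDist d ε ys zs θ := by
  have h := norm_sum_sq_div_sub_le (fun i => √(kG d ε (θ - ys i)))
    (fun i => √(kG d ε (θ - zs i))) (fun i => Real.sqrt_pos.2 (kG_pos hε _))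
    (fun i => Real.sqrt_pos.2 (kG_pos hε _)) hn xs hM
  simp only [Real.sq_sqrt (kG_pos hε _).le] at h
  exact h

lemma continuous_rootDist (ys zs : Fin n → EuclideanSpace ℝ (Fin d)) :
    Continuous (rootDist d ε ys zs) := by
  unfold rootDist
  exact Real.continuous_sqrt.comp (continuous_finsetSum _ fun i _ =>
    ((Real.continuous_sqrt.comp (continuous_kG_sub _)).sub
      (Real.continuous_sqrt.comp (continuous_kG_sub _))).pow 2)

lemma integral_rootDist_sq_le (hε : 0 < ε) (ys zs : Fin n → EuclideanSpace ℝ (Fin d)) :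
    Integrable (fun θ => rootDist d ε ys zs θ ^ 2) ∧
    ∫ θ, rootDist d ε ys zs θ ^ 2 ≤ (∑ i, ‖zs i - ys i‖ ^ 2) / (4 * ε ^ 2) := by
  have h : ∀ θ, rootDist d ε ys zs θ ^ 2 =
      ∑ i, (√(kG d ε (θ - zs i)) - √(kG d ε (θ - ys i))) ^ 2 := fun θ =>
    Real.sq_sqrt (Finset.sum_nonneg fun i _ => sq_nonneg _)
  simp_rw [h]
  have hi := fun i => hellinger_kG hε (ys i) (zs i)
  refine ⟨integrable_finsetSum _ fun i _ => (hi i).1, ?_⟩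
  rw [integral_finsetSum _ fun i _ => (hi i).1, Finset.sum_div]
  exact Finset.sum_le_sum fun i _ => (hi i).2

/-- Moving the kernels from `ys` to `ys + t φs` while keeping the vectors `xs`, `φs` fixed increases
the bilinear form by at most `3 t Y Φ² / ε`. -/
lemma inner_wField_sub_le (hε : 0 < ε) (hn : 1 ≤ n) (ys zs xs φs : Fin n → EuclideanSpace ℝ (Fin d))
    {t Y Φ : ℝ} (ht : 0 ≤ t) (hzs : ∀ j, zs j = ys j + t • φs j) (hY0 : 0 ≤ Y) (hΦ0 : 0 ≤ Φ)
    (hY : ∑ i, ‖xs i‖ ^ 2 = Y ^ 2) (hΦ : ∑ i, ‖φs i‖ ^ 2 = Φ ^ 2) :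
    (∫ θ, ⟪wField d ε zs xs θ, wField d ε zs φs θ⟫) -
      ∫ θ, ⟪wField d ε ys xs θ, wField d ε ys φs θ⟫ ≤ 3 * Y * Φ * (t * Φ) / ε := by
  have hmax : ∀ (v : Fin n → EuclideanSpace ℝ (Fin d)) {M : ℝ}, 0 ≤ M →
      ∑ i, ‖v i‖ ^ 2 = M ^ 2 → ∀ i, ‖v i‖ ≤ M := by
    intro v M hM h i
    refine le_of_sq_le_sq ?_ hM
    rw [← h]
    exact Finset.single_le_sum (f := fun i => ‖v i‖ ^ 2) (fun i _ => sq_nonneg _)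
      (Finset.mem_univ i)
  obtain ⟨hδi, hδ⟩ := integral_rootDist_sq_le hε ys zs
  have hδ' : ∫ θ, rootDist d ε ys zs θ ^ 2 ≤ (t * Φ / (2 * ε)) ^ 2 := by
    refine hδ.trans_eq ?_
    have : ∑ i, ‖zs i - ys i‖ ^ 2 = t ^ 2 * Φ ^ 2 := by
      rw [← hΦ, Finset.mul_sum]
      refine Finset.sum_congr rfl fun i _ => ?_
      rw [hzs, add_sub_cancel_left, norm_smul, Real.norm_of_nonneg ht, mul_pow]
    rw [this]
    field_simp
    ring
  have hδc := (continuous_rootDist (ε := ε) ys zs).aestronglyMeasurable (μ := volume)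
  have hδ0 : ∀ θ, 0 ≤ rootDist d ε ys zs θ := fun θ => Real.sqrt_nonneg _
  obtain ⟨hB, hB'⟩ := integral_norm_wField_sq_le hε hn zs φs
  obtain ⟨hA, hA'⟩ := integral_norm_wField_sq_le hε hn ys xs
  rw [hΦ] at hB'
  rw [hY] at hA'
  obtain ⟨j1, k1⟩ := integral_mul_le_of_sq hδc
    (continuous_wField hε hn zs φs).norm.aestronglyMeasurable hδ0 (fun _ => norm_nonneg _) hδi hB
    (by positivity) hΦ0 hδ' hB'
  obtain ⟨j2, k2⟩ := integral_mul_le_of_sq hδc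
    (continuous_wField hε hn ys xs).norm.aestronglyMeasurable hδ0 (fun _ => norm_nonneg _) hδi hA
    (by positivity) hY0 hδ' hA'
  have i1 := integrable_inner_wField hε hn zs xs φs
  have i2 := integrable_inner_wField hε hn ys xs φs
  rw [← integral_sub i1 i2]
  have hpt : ∀ θ, ⟪wField d ε zs xs θ, wField d ε zs φs θ⟫ -
      ⟪wField d ε ys xs θ, wField d ε ys φs θ⟫ ≤
      3 * Y * (rootDist d ε ys zs θ * ‖wField d ε zs φs θ‖) +
        3 * Φ * (rootDist d ε ys zs θ * ‖wField d ε ys xs θ‖) := by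
    intro θ
    have e : ⟪wField d ε zs xs θ, wField d ε zs φs θ⟫ -
        ⟪wField d ε ys xs θ, wField d ε ys φs θ⟫ =
        ⟪wField d ε zs xs θ - wField d ε ys xs θ, wField d ε zs φs θ⟫ +
        ⟪wField d ε ys xs θ, wField d ε zs φs θ - wField d ε ys φs θ⟫ := by
      rw [inner_sub_left, inner_sub_right]; ring
    have b1 := mul_le_mul_of_nonneg_right
      (norm_wField_sub_le hε hn ys zs xs (hmax xs hY0 hY) θ) (norm_nonneg (wField d ε zs φs θ))
    have b2 := mul_le_mul_of_nonneg_right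
      (norm_wField_sub_le hε hn ys zs φs (hmax φs hΦ0 hΦ) θ) (norm_nonneg (wField d ε ys xs θ))
    have c1 := real_inner_le_norm (wField d ε zs xs θ - wField d ε ys xs θ) (wField d ε zs φs θ)
    have c2 := real_inner_le_norm (wField d ε ys xs θ) (wField d ε zs φs θ - wField d ε ys φs θ)
    rw [e]
    linarith
  refine (integral_mono (i1.sub i2) ((j1.const_mul _).add (j2.const_mul _)) hpt).trans ?_
  simp only [Pi.add_apply]
  rw [integral_add (j1.const_mul _) (j2.const_mul _), integral_const_mul, integral_const_mul]
  have m1 := mul_le_mul_of_nonneg_left k1 (show 0 ≤ 3 * Y by positivity)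
  have m2 := mul_le_mul_of_nonneg_left k2 (show 0 ≤ 3 * Φ by positivity)
  refine (add_le_add m1 m2).trans_eq ?_
  field_simp
  ring

end Field

/-! ### The smoothness estimate -/

/-- Proposition D.2: smoothness of the mollified entropy along particle
paths. -/
theorem stmt_11 (d : ℕ) (hd : 1 ≤ d) (ε : ℝ) (hε : 0 < ε) (n : ℕ) (hn : 1 ≤ n)
    (ys φs : Fin n → EuclideanSpace ℝ (Fin d))
    (m2 : ℝ) (hm2 : m2 = (1 / n : ℝ) * ∑ i, ‖ys i‖ ^ 2)
    (t : ℝ) (ht : 0 ≤ t)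
    (zs : Fin n → EuclideanSpace ℝ (Fin d)) (hzs : ∀ j, zs j = ys j + t • φs j) :
    (1 / n : ℝ) * ∑ j, ⟪entGrad d ε zs (zs j) - entGrad d ε ys (ys j), φs j⟫ ≤
      (1 / ε ^ 2 + 3 * Real.sqrt (m2 * n) / ε ^ 3 + Real.sqrt n / ε ^ 2 +
        n * Real.sqrt m2 / ε ^ 3) * t * ((1 / n : ℝ) * ∑ j, ‖φs j‖ ^ 2) := by
  have hn0 : (0 : ℝ) < n := by exact_mod_cast hn
  have hm2n : m2 * n = ∑ i, ‖ys i‖ ^ 2 := by rw [hm2]; field_simp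
  have hY : ∑ i, ‖ys i‖ ^ 2 = √(m2 * n) ^ 2 := by
    rw [Real.sq_sqrt, hm2n]
    rw [hm2n]; positivity
  have hΦ : ∑ i, ‖φs i‖ ^ 2 = √(∑ i, ‖φs i‖ ^ 2) ^ 2 := by
    rw [Real.sq_sqrt]; positivity
  have hdiff := inner_wField_sub_le hε hn ys zs ys φs ht hzs (Real.sqrt_nonneg _)
    (Real.sqrt_nonneg _) hY hΦ
  have hB := integral_norm_wField_sq_le hε hn zs φs
  -- Splitting `zs = ys + t φs` in the first slot leaves a nonnegative quadratic term, which the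
  -- Gaussian means `-t ∑ ‖φⱼ‖²` absorb.
  have hlin : ∫ θ, ⟪wField d ε zs zs θ, wField d ε zs φs θ⟫ =
      (∫ θ, ⟪wField d ε zs ys θ, wField d ε zs φs θ⟫) +
        t * ∫ θ, ‖wField d ε zs φs θ‖ ^ 2 := by
    rw [← integral_const_mul, ← integral_add (integrable_inner_wField hε hn zs ys φs)
      (hB.1.const_mul t)]
    congr 1
    funext θ
    rw [wField_add_smul zs ys φs zs t hzs θ, inner_add_left, real_inner_smul_left,
      real_inner_self_eq_norm_sq]
  have hz : ∑ j, ⟪zs j, φs j⟫ = ∑ j, ⟪ys j, φs j⟫ + t * ∑ j, ‖φs j‖ ^ 2 := by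
    rw [Finset.mul_sum, ← Finset.sum_add_distrib]
    refine Finset.sum_congr rfl fun j _ => ?_
    rw [hzs, inner_add_left, real_inner_smul_left, real_inner_self_eq_norm_sq]
  have hmain : ∑ j, ⟪entGrad d ε zs (zs j) - entGrad d ε ys (ys j), φs j⟫ ≤
      3 * √(m2 * n) / ε ^ 3 * t * ∑ j, ‖φs j‖ ^ 2 := by
    simp only [inner_sub_left, Finset.sum_sub_distrib]
    rw [sum_inner_entGrad hε hn, sum_inner_entGrad hε hn, ← mul_sub, hlin, hz]
    have hle := mul_le_mul_of_nonneg_left hB.2 ht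
    refine (mul_le_mul_of_nonneg_left (a := 1 / ε ^ 2)
      (c := 3 * √(m2 * n) * √(∑ i, ‖φs i‖ ^ 2) * (t * √(∑ i, ‖φs i‖ ^ 2)) / ε)
      (by linarith) (by positivity)).trans_eq ?_
    rw [show 3 * √(m2 * n) / ε ^ 3 * t * ∑ j, ‖φs j‖ ^ 2 =
      3 * √(m2 * n) / ε ^ 3 * t * √(∑ i, ‖φs i‖ ^ 2) ^ 2 by rw [← hΦ]]
    field_simp
  have hcoef : 3 * √(m2 * n) / ε ^ 3 ≤ 1 / ε ^ 2 + 3 * √(m2 * n) / ε ^ 3 + √n / ε ^ 2 +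
      n * √m2 / ε ^ 3 := by
    have h1 : 0 ≤ 1 / ε ^ 2 := by positivity
    have h2 : 0 ≤ √(n : ℝ) / ε ^ 2 := by positivity
    have h3 : 0 ≤ n * √m2 / ε ^ 3 := by positivity
    linarith
  calc (1 / n : ℝ) * ∑ j, ⟪entGrad d ε zs (zs j) - entGrad d ε ys (ys j), φs j⟫
      ≤ (1 / n : ℝ) * (3 * √(m2 * n) / ε ^ 3 * t * ∑ j, ‖φs j‖ ^ 2) := by gcongr
    _ = 3 * √(m2 * n) / ε ^ 3 * t * ((1 / n : ℝ) * ∑ j, ‖φs j‖ ^ 2) := by ring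
    _ ≤ _ := by gcongr
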